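/- Assume n is even. Then for every integer k with 0 ≤ k < m−2, the Borda Count social choice correspondence is not k-augmentation strategyproof: there exist a profile with n voters, a voter i, a manipulation ≻'_i, and a tie-breaker τ such that Borda_τ(≻'_i, ≻_{−i}) ≻_i Borda_τ(≻ + k(≻_i)). Combined with the matching upper bound, the manipulation potential of Borda Count is exactly m−2. -/

import Mathlib

open Finset

/-- A strict linear preference order over `m` candidates, encoded as the permutation sending
each candidate to its rank; rank `0` is the most preferred position, so
`c ≻ c'` iff `p c < p c'`. -/
abbrev Pref (m : ℕ) := Equiv.Perm (Fin m)

/-- A profile of `N` voters, each with a strict preference over `m` candidates. -/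
abbrev Profile (m N : ℕ) := Fin N → Pref m

/-- A social choice correspondence: for each number `N` of voters, it maps each `N`-voter
profile to a set of (tied) winners. -/
abbrev SCC (m : ℕ) := (N : ℕ) → Profile m N → Finset (Fin m)

/-- The profile `P` with `k` extra copies of voter `i`'s preference appended. -/
def addCopies {m n : ℕ} (P : Profile m n) (i : Fin n) (k : ℕ) : Profile m (n + k) :=
  fun j => if h : (j : ℕ) < n then P ⟨j, h⟩ else P i

/-- Break a tie among the candidates in `A` using the linear tie-breaking order `τ`:
the winner is the `τ`-maximal (lowest `τ`-rank) element of `A`. -/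
noncomputable def tiebreak {m : ℕ} [NeZero m] (τ : Pref m) (A : Finset (Fin m)) : Fin m :=
  if h : A.Nonempty then τ.symm ((A.image (fun c => τ c)).min' (h.image _)) else 0

/-- `F` is `k`-augmentation strategyproof on `n`-voter profiles: for every tie-breaker `τ`,
profile `P`, voter `i`, and alternative preference `q`, voter `i` weakly prefers the outcome
obtained by adding `k` truthful copies of her vote to the outcome of the manipulation `q`. -/
def kASP (m n : ℕ) [NeZero m] (F : SCC m) (k : ℕ) : Prop :=
  ∀ (τ : Pref m) (P : Profile m n) (i : Fin n) (q : Pref m),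
    (P i) (tiebreak τ (F (n + k) (addCopies P i k))) ≤
      (P i) (tiebreak τ (F n (Function.update P i q)))

/-- The manipulation potential of `F` on `n`-voter profiles: the least `k` such that `F` is
`k'`-augmentation strategyproof for all `k' ≥ k`, and `⊤` (i.e. `∞`) if no such `k` exists. -/
noncomputable def manipPot (m n : ℕ) [NeZero m] (F : SCC m) : ℕ∞ :=
  sInf ((fun k : ℕ => (k : ℕ∞)) '' {k : ℕ | ∀ k' : ℕ, k ≤ k' → kASP m n F k'})

/-- Borda score of candidate `c`: each voter awards `m - 1 - (rank of c)` points. -/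
def bordaScore {m N : ℕ} (P : Profile m N) (c : Fin m) : ℕ :=
  ∑ i : Fin N, (m - 1 - (P i c : ℕ))

/-- Borda Count: the winners are the candidates with maximal Borda score. -/
def borda (m : ℕ) : SCC m := fun _ P =>
  Finset.univ.filter (fun c => ∀ c', bordaScore P c' ≤ bordaScore P c)

/-!
Work with rank sums, where lower is better. Let `b` win when `k` truthful copies of voter `i`, with
ranking `p`, are added, let `a` win when she votes `q` instead, and suppose she prefers `a`. Adding
the two comparisons of `a` with `b` gives `(k + 1) (p b - p a) < q b - q a ≤ m - 1`, strictly
because the tie-breaker cannot favour `b` once and `a` the other time; so `k < m - 2`.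

Conversely, let the voters `0, 1, 2, …` alternate between the order `0, 1, …, m - 1` and its
reverse, except that voter `1` has the order `1, 2, …, x, 0, x + 1, …`. With `x = k + 1`, or
`x = k + 2` if the last voter is left without a reversed partner, the candidates `0` and `1` tie
once `k` copies of voter `0` are added, whereas she makes `0` win by voting `0, m - 1, …, 1`.
-/

section RankSum

variable {m N : ℕ}

/-- The sum of the ranks of `c` over all voters. It complements the Borda score to a constant, so
Borda winners minimize it, and it involves no truncated subtraction. -/
def rankSum (P : Profile m N) (c : Fin m) : ℕ :=
  ∑ i, (P i c : ℕ)

lemma bordaScore_add_rankSum (P : Profile m N) (c : Fin m) :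
    bordaScore P c + rankSum P c = N * (m - 1) := by
  have rank_le (i : Fin N) : (P i c : ℕ) ≤ m - 1 := by omega
  simp only [bordaScore, rankSum, ← sum_add_distrib, Nat.sub_add_cancel (rank_le _), sum_const,
    card_univ, Fintype.card_fin, smul_eq_mul]

lemma bordaScore_le_bordaScore_iff {P : Profile m N} {c d : Fin m} :
    bordaScore P c ≤ bordaScore P d ↔ rankSum P d ≤ rankSum P c := by
  have hc := bordaScore_add_rankSum P c
  have hd := bordaScore_add_rankSum P d
  omega

lemma mem_borda_iff {P : Profile m N} {c : Fin m} :
    c ∈ borda m N P ↔ ∀ d, rankSum P c ≤ rankSum P d := by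
  simp only [borda, mem_filter_univ, bordaScore_le_bordaScore_iff]

lemma borda_nonempty [NeZero m] (P : Profile m N) : (borda m N P).Nonempty := by
  obtain ⟨c, -, hc⟩ := exists_min_image univ (rankSum P) univ_nonempty
  exact ⟨c, mem_borda_iff.2 fun d => hc d (mem_univ d)⟩

lemma rankSum_addCopies (P : Profile m N) (i : Fin N) (k : ℕ) (c : Fin m) :
    rankSum (addCopies P i k) c = rankSum P c + k * (P i c : ℕ) := by
  simp [rankSum, addCopies, Fin.sum_univ_add]

lemma rankSum_update_add (P : Profile m N) (i : Fin N) (q : Pref m) (c : Fin m) :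
    rankSum (Function.update P i q) c + (P i c : ℕ) = rankSum P c + (q c : ℕ) := by
  have unchanged : ∑ j ∈ univ.erase i, (Function.update P i q j c : ℕ) =
      ∑ j ∈ univ.erase i, (P j c : ℕ) :=
    sum_congr rfl fun j hj => by rw [Function.update_of_ne (ne_of_mem_erase hj)]
  rw [rankSum, rankSum, ← add_sum_erase _ _ (mem_univ i), unchanged, Function.update_self,
    ← add_sum_erase _ (fun j => (P j c : ℕ)) (mem_univ i)]
  ring

end RankSum

section Tiebreak

variable {m : ℕ} [NeZero m] {A : Finset (Fin m)}

lemma apply_tiebreak (τ : Pref m) (hA : A.Nonempty) :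
    τ (tiebreak τ A) = (A.image τ).min' (hA.image τ) := by
  simp [tiebreak, hA]

lemma tiebreak_mem (τ : Pref m) (hA : A.Nonempty) : tiebreak τ A ∈ A := by
  have hmin := min'_mem (A.image τ) (hA.image τ)
  rwa [← apply_tiebreak τ hA, τ.injective.mem_finset_image] at hmin

lemma apply_tiebreak_le (τ : Pref m) {c : Fin m} (hc : c ∈ A) : τ (tiebreak τ A) ≤ τ c := by
  rw [apply_tiebreak τ ⟨c, hc⟩]
  exact min'_le _ _ (mem_image_of_mem τ hc)

end Tiebreak

section BordaWinner

variable {m N M : ℕ} [NeZero m] {τ : Pref m} {P : Profile m N} {Q : Profile m M} {c d : Fin m}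

/-- The single winner `Borda_τ(P)` under Borda Count with tie-breaker `τ`. -/
noncomputable def bordaWinner (τ : Pref m) (P : Profile m N) : Fin m :=
  tiebreak τ (borda m N P)

lemma rankSum_bordaWinner_le (τ : Pref m) (P : Profile m N) (c : Fin m) :
    rankSum P (bordaWinner τ P) ≤ rankSum P c :=
  mem_borda_iff.1 (tiebreak_mem τ (borda_nonempty P)) c

lemma apply_bordaWinner_le (h : rankSum P c ≤ rankSum P (bordaWinner τ P)) :
    τ (bordaWinner τ P) ≤ τ c :=
  apply_tiebreak_le τ <| mem_borda_iff.2 fun d => h.trans (rankSum_bordaWinner_le τ P d)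

lemma bordaWinner_eq_of_forall_lt (h : ∀ d ≠ c, rankSum P c < rankSum P d) :
    bordaWinner τ P = c :=
  of_not_not fun hne => (rankSum_bordaWinner_le τ P c).not_gt (h _ hne)

lemma bordaWinner_ne_of_le_of_lt (hP : rankSum P c ≤ rankSum P d) (hτ : τ c < τ d) :
    bordaWinner τ P ≠ d := by
  rintro rfl
  exact (apply_bordaWinner_le hP).not_gt hτ

lemma rankSum_add_rankSum_lt_of_bordaWinner_ne (h : bordaWinner τ P ≠ bordaWinner τ Q) :
    rankSum P (bordaWinner τ P) + rankSum Q (bordaWinner τ Q) <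
      rankSum P (bordaWinner τ Q) + rankSum Q (bordaWinner τ P) := by
  have hP := rankSum_bordaWinner_le τ P (bordaWinner τ Q)
  have hQ := rankSum_bordaWinner_le τ Q (bordaWinner τ P)
  by_contra! hle
  exact h <| τ.injective <|
    le_antisymm (apply_bordaWinner_le (by omega)) (apply_bordaWinner_le (by omega))

end BordaWinner

lemma kASP_borda_of_le {m n k : ℕ} [NeZero m] (hk : m ≤ k + 2) : kASP m n (borda m) k := by
  intro τ P i q
  change P i (bordaWinner τ (addCopies P i k)) ≤ P i (bordaWinner τ (Function.update P i q))
  by_contra! hlt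
  have hne : bordaWinner τ (addCopies P i k) ≠ bordaWinner τ (Function.update P i q) :=
    fun h => hlt.ne' (congrArg (P i) h)
  have exchange := rankSum_add_rankSum_lt_of_bordaWinner_ne hne
  set b := bordaWinner τ (addCopies P i k)
  set a := bordaWinner τ (Function.update P i q)
  have update_a := rankSum_update_add P i q a
  have update_b := rankSum_update_add P i q b
  rw [rankSum_addCopies, rankSum_addCopies] at exchange
  have gap_lt : (k + 1) * (P i b : ℕ) < (k + 1) * (P i a : ℕ) + (q b : ℕ) := by
    simp only [add_one_mul]
    omega
  have gap_ge : (k + 1) * (P i a + 1 : ℕ) ≤ (k + 1) * (P i b : ℕ) := Nat.mul_le_mul_left _ hlt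
  rw [mul_add_one] at gap_ge
  omega

section PivotalProfile

variable {m n : ℕ}

/-- The profile in which voters `0, 2, 4, …` rank the candidates in increasing order and voters
`1, 3, 5, …` in decreasing order; consecutive voters cancel. -/
def alternatingProfile (m n : ℕ) : Profile m n :=
  fun j => if Even (j : ℕ) then Equiv.refl _ else Fin.revPerm

lemma rankSum_alternatingProfile (n : ℕ) (c : Fin m) :
    rankSum (alternatingProfile m n) c = n % 2 * c + n / 2 * (m - 1) := by
  induction n with
  | zero => simp [rankSum]
  | succ n ih =>
    have last : rankSum (alternatingProfile m (n + 1)) c =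
        rankSum (alternatingProfile m n) c + (alternatingProfile m (n + 1) (Fin.last n) c : ℕ) :=
      Fin.sum_univ_castSucc _
    rw [last, ih]
    rcases Nat.even_or_odd' n with ⟨t, rfl | rfl⟩
    · simp [alternatingProfile, Nat.add_mod, Nat.add_div, add_comm]
    · have half : (2 * t + 1 + 1) / 2 = (2 * t + 1) / 2 + 1 := by omega
      have parity : (2 * t + 1) % 2 = 1 := by omega
      have parity_succ : (2 * t + 1 + 1) % 2 = 0 := by omega
      simp only [alternatingProfile, Fin.val_last, Nat.not_even_bit1, ↓reduceIte,
        Fin.revPerm_apply, Fin.val_rev, half, parity, parity_succ, zero_mul, one_mul, add_one_mul]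
      omega

/-- The profile from which voter `0` can manipulate: in the alternating profile, voter `1` is given
the order `1, 2, …, x, 0, x + 1, …` instead. -/
def pivotalProfile (hn : 2 ≤ n) (x : Fin m) : Profile m n :=
  Function.update (alternatingProfile m n) ⟨1, hn⟩ x.cycleRange.symm

lemma pivotalProfile_zero (hn : 2 ≤ n) (x : Fin m) :
    pivotalProfile hn x ⟨0, by omega⟩ = Equiv.refl _ := by
  simp [pivotalProfile, alternatingProfile]

lemma rankSum_pivotalProfile_add (hn : 2 ≤ n) (x c : Fin m) :
    rankSum (pivotalProfile hn x) c + (m - 1) =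
      (n % 2 + 1) * c + x.cycleRange.symm c + n / 2 * (m - 1) := by
  have update := rankSum_update_add (alternatingProfile m n) ⟨1, hn⟩ x.cycleRange.symm c
  have reversed : (alternatingProfile m n ⟨1, hn⟩ c : ℕ) = m - (c + 1) := by
    simp [alternatingProfile]
  rw [rankSum_alternatingProfile, reversed] at update
  rw [pivotalProfile, add_one_mul]
  omega

lemma val_le_cycleRange_symm_add_one (x c : Fin m) : (c : ℕ) ≤ x.cycleRange.symm c + 1 := by
  obtain ⟨d, rfl⟩ := x.cycleRange.surjective c
  have : NeZero m := ⟨x.pos.ne'⟩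
  rw [Equiv.symm_apply_apply]
  rcases lt_trichotomy d x with hlt | rfl | hgt
  · rw [Fin.coe_cycleRange_of_lt hlt]
  · simp [Fin.cycleRange_self]
  · simp [Fin.cycleRange_of_gt hgt]

lemma bordaWinner_update_pivotalProfile [NeZero m] (hn : 2 ≤ n) {x : Fin m}
    (hx : (x : ℕ) < m - 1 + n % 2) (τ : Pref m) :
    bordaWinner τ (Function.update (pivotalProfile hn x) ⟨0, by omega⟩ (Equiv.neg _)) = 0 := by
  refine bordaWinner_eq_of_forall_lt fun c hc => ?_
  have neg_c : ((-c : Fin m) : ℕ) = m - c := by rw [Fin.val_neg, if_neg hc]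
  have c_pos : 0 < (c : ℕ) := Fin.val_pos_iff.2 (pos_iff_ne_zero.2 hc)
  have shift_c := val_le_cycleRange_symm_add_one x c
  have parity_le : n % 2 ≤ n % 2 * c := Nat.le_mul_of_pos_right _ c_pos
  have update_zero := rankSum_update_add (pivotalProfile hn x) ⟨0, by omega⟩ (Equiv.neg _) 0
  have update_c := rankSum_update_add (pivotalProfile hn x) ⟨0, by omega⟩ (Equiv.neg _) c
  have sum_zero := rankSum_pivotalProfile_add hn x 0
  have sum_c := rankSum_pivotalProfile_add hn x c
  simp only [pivotalProfile_zero, Equiv.refl_apply, Equiv.neg_apply, neg_zero, neg_c]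
    at update_zero update_c
  rw [Fin.cycleRange_symm_zero, Fin.val_zero, mul_zero] at sum_zero
  rw [add_one_mul] at sum_c
  omega

lemma rankSum_addCopies_pivotalProfile_one [NeZero m] (hn : 2 ≤ n) {x : Fin m} {k : ℕ}
    (hx : (x : ℕ) = k + n % 2 + 1) :
    rankSum (addCopies (pivotalProfile hn x) ⟨0, by omega⟩ k) 1 =
      rankSum (addCopies (pivotalProfile hn x) ⟨0, by omega⟩ k) 0 := by
  have val_one : ((1 : Fin m) : ℕ) = 1 := by
    rw [Fin.val_one', Nat.mod_eq_of_lt (by omega)]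
  have shift_one : x.cycleRange.symm 1 = 0 := by
    have zero_lt : (0 : Fin m) < x := Fin.val_pos_iff.1 (by omega)
    rw [Equiv.symm_apply_eq, Fin.cycleRange_of_lt zero_lt, zero_add]
  have sum_zero := rankSum_pivotalProfile_add hn x 0
  have sum_one := rankSum_pivotalProfile_add hn x 1
  rw [Fin.cycleRange_symm_zero, Fin.val_zero, mul_zero] at sum_zero
  rw [shift_one, val_one, Fin.val_zero, mul_one] at sum_one
  simp only [rankSum_addCopies, pivotalProfile_zero, Equiv.refl_apply, val_one, Fin.val_zero,
    mul_zero, mul_one]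
  omega

end PivotalProfile

lemma not_kASP_borda_of_lt {m n k : ℕ} [NeZero m] (hn : 2 ≤ n) (hk : k + 2 < m) :
    ¬ kASP m n (borda m) k := by
  intro hASP
  let x : Fin m := ⟨k + n % 2 + 1, by omega⟩
  let τ : Pref m := Equiv.swap 0 1
  have one_pos : (0 : Fin m) < 1 := Fin.val_pos_iff.1 <| by
    rw [Fin.val_one', Nat.mod_eq_of_lt (by omega)]
    exact one_pos
  have τ_one_lt : τ 1 < τ 0 := by
    rwa [Equiv.swap_apply_left, Equiv.swap_apply_right]
  have truthful_ne : bordaWinner τ (addCopies (pivotalProfile hn x) ⟨0, by omega⟩ k) ≠ 0 :=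
    bordaWinner_ne_of_le_of_lt (rankSum_addCopies_pivotalProfile_one hn rfl).le τ_one_lt
  have manipulated_eq :=
    bordaWinner_update_pivotalProfile hn (x := x) (by simp only [x]; omega) τ
  have hle := hASP τ (pivotalProfile hn x) ⟨0, by omega⟩ (Equiv.neg _)
  rw [pivotalProfile_zero, Equiv.refl_apply, Equiv.refl_apply] at hle
  exact truthful_ne (nonpos_iff_eq_zero.1 (hle.trans_eq manipulated_eq))

theorem kASP_borda_iff {m n k : ℕ} [NeZero m] (hn : 2 ≤ n) :
    kASP m n (borda m) k ↔ m ≤ k + 2 :=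
  ⟨fun h => le_of_not_gt fun hk => not_kASP_borda_of_lt hn hk h, kASP_borda_of_le⟩

lemma manipPot_eq_of_kASP_iff {m n K : ℕ} [NeZero m] {F : SCC m}
    (h : ∀ k, kASP m n F k ↔ K ≤ k) : manipPot m n F = K := by
  have least : IsLeast {k : ℕ | ∀ k', k ≤ k' → kASP m n F k'} K :=
    ⟨fun k' => (h k').2, fun k hk => (h k).1 (hk k le_rfl)⟩
  exact (Nat.mono_cast.map_isLeast least).csInf_eq

theorem borda_manipPot_eq_general {m n K : ℕ} [NeZero m] (hK : K + 2 = m) (hn : 2 ≤ n) :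
    (∀ k : ℕ, k < K → ¬ kASP m n (borda m) k) ∧ manipPot m n (borda m) = K := by
  have kASP_iff (k : ℕ) : kASP m n (borda m) k ↔ K ≤ k := by
    rw [kASP_borda_iff hn, ← hK, add_le_add_iff_right]
  exact ⟨fun k hk => mt (kASP_iff k).1 hk.not_ge, manipPot_eq_of_kASP_iff kASP_iff⟩

/-- For even `n`: for every `k < m − 2`, Borda Count is not
`k`-augmentation strategyproof; combined with the matching upper bound,
`Φ(Borda) = m − 2`. -/
theorem borda_manipPot_eq (m n : ℕ) [NeZero m] (hm : 3 ≤ m) (hn : 2 ≤ n)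
    (hne : Even n) :
    (∀ k : ℕ, k < m - 2 → ¬ kASP m n (borda m) k) ∧
      manipPot m n (borda m) = ((m - 2 : ℕ) : ℕ∞) :=
  borda_manipPot_eq_general (by omega) hn
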